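/- arXiv:0906.1699 — 4 statements merged into one kernel-verified Lean document; each statement's English description precedes it below -/
import Mathlib

section
/- Let h : ℝ → ℝ be continuous and nondecreasing on [0,∞) with h(0) = 0 and h(x) > 0 for every x > 0, and suppose that ∫_{(0,ε)} h(v)^{-2} dv = ∞ for every ε > 0. Then there exists a strictly decreasing sequence (a_n)_{n≥0} of real numbers with a_0 = 1, a_n > 0 for all n, a_n → 0 as n → ∞, and ∫_{a_n}^{a_{n-1}} h(v)^{-2} dv = n for every n ≥ 1. -/
open MeasureTheory Set Filter

/-!
Put `g = h⁻²` and `F x = ∫ v in x..1, g v` for `0 < x ≤ 1`. Then `F` is continuous and antitone,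
`F 1 = 0`, and `F x → ∞` as `x → 0⁺` because `g` is not integrable at `0`. By the intermediate
value theorem `F` takes the value `1 + 2 + ⋯ + n` at some `a n`; subtracting consecutive values
gives the required integrals, and `a n → 0` since `F (a n) → ∞` while `F` is bounded on `[ε, 1]`
for every `ε > 0`.
-/

open scoped Topology

lemma exists_strictAnti_tendsto_comp_eq {α β : Type*} [ConditionallyCompleteLinearOrder α]
    [TopologicalSpace α] [OrderTopology α] [DenselyOrdered α] [LinearOrder β] [TopologicalSpace β]
    [OrderClosedTopology β] {F : α → β} {l b : α} {s : ℕ → β} (hlb : l < b)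
    (hcont : ContinuousOn F (Ioc l b)) (hanti : AntitoneOn F (Ioc l b))
    (htop : Tendsto F (𝓝[>] l) atTop) (hs : StrictMono s) (hs_zero : s 0 = F b)
    (hs_top : Tendsto s atTop atTop) :
    ∃ a : ℕ → α, StrictAnti a ∧ a 0 = b ∧ (∀ n, a n ∈ Ioc l b) ∧ Tendsto a atTop (𝓝 l) ∧
      ∀ n, F (a n) = s n := by
  have hb : b ∈ Ioc l b := right_mem_Ioc.2 hlb
  have : (𝓝[>] l).NeBot := nhdsGT_neBot_of_exists_gt ⟨b, hlb⟩
  have hsurj : Ici (F b) ⊆ F '' Ioc l b :=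
    isPreconnected_Ioc.intermediate_value_Ici hb (le_principal_iff.2 (Ioc_mem_nhdsGT hlb)) hcont
      htop
  -- `F` may be constant near `b`, so `a 0 = b` has to be imposed separately.
  have hex : ∀ n, ∃ x ∈ Ioc l b, F x = s n ∧ (n = 0 → x = b) := by
    rintro (_ | n)
    · exact ⟨b, hb, hs_zero.symm, fun _ => rfl⟩
    · obtain ⟨x, hx, hFx⟩ := hsurj (hs_zero.symm.le.trans (hs.monotone n.succ.zero_le))
      exact ⟨x, hx, hFx, nofun⟩
  choose a ha hFa ha_zero using hex
  have ha_lt_of_lt {n : ℕ} {x : α} (hx : x ∈ Ioc l b) (hlt : F x < s n) : a n < x :=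
    hanti.reflect_lt hx (ha n) (hlt.trans_eq (hFa n).symm)
  have ha_tendsto : Tendsto a atTop (𝓝 l) := by
    refine tendsto_order.2 ⟨fun y hy => .of_forall fun n => hy.trans (ha n).1, fun y hy => ?_⟩
    have hmin : min y b ∈ Ioc l b := ⟨lt_min hy hlb, min_le_right y b⟩
    obtain ⟨N, hN⟩ := (hs_top.eventually_ge_atTop (F (min y b))).exists
    filter_upwards [eventually_gt_atTop N] with n hn
    exact (ha_lt_of_lt hmin (hN.trans_lt (hs hn))).trans_le (min_le_left y b)
  exact ⟨a, fun m n hmn => ha_lt_of_lt (ha m) ((hFa m).trans_lt (hs hmn)), ha_zero 0 rfl, ha,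
    ha_tendsto, hFa⟩

section Primitive

variable {μ : Measure ℝ}

lemma integrableOn_uIcc_of_locallyIntegrableOn {E : Type*} [NormedAddCommGroup E] {g : ℝ → E}
    {s : Set ℝ} [s.OrdConnected] (hg : LocallyIntegrableOn g s μ) {x y : ℝ} (hx : x ∈ s)
    (hy : y ∈ s) : IntegrableOn g (uIcc x y) μ :=
  hg.integrableOn_compact_subset (OrdConnected.uIcc_subset ‹_› hx hy) isCompact_uIcc

variable {l b : ℝ}

lemma continuousOn_integral_Ioc_left [NullSingletonClass μ] {E : Type*} [NormedAddCommGroup E]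
    [NormedSpace ℝ E] {g : ℝ → E} (hg : LocallyIntegrableOn g (Ioc l b) μ) :
    ContinuousOn (fun x => ∫ v in x..b, g v ∂μ) (Ioc l b) := by
  intro x hx
  obtain ⟨d, hld, hdx⟩ := exists_between hx.1
  have hdb : d ≤ b := (hdx.trans_le hx.2).le
  have hint : IntegrableOn g (uIcc d b) μ :=
    integrableOn_uIcc_of_locallyIntegrableOn hg ⟨hld, hdb⟩ ⟨hld.trans_le hdb, le_rfl⟩
  have hmem : uIcc d b ∈ 𝓝[Ioc l b] x := by
    rw [uIcc_of_le hdb]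
    filter_upwards [mem_nhdsWithin_of_mem_nhds (Ioi_mem_nhds hdx), self_mem_nhdsWithin]
      with y hdy hy using ⟨hdy.le, hy.2⟩
  exact (intervalIntegral.continuousOn_primitive_interval_left hint x
    (mem_of_mem_nhdsWithin hx hmem)).mono_of_mem_nhdsWithin hmem

variable {g : ℝ → ℝ}

lemma antitoneOn_integral_Ioc_left (hg : LocallyIntegrableOn g (Ioc l b) μ)
    (hg_nonneg : 0 ≤ᵐ[μ.restrict (Ioc l b)] g) :
    AntitoneOn (fun x => ∫ v in x..b, g v ∂μ) (Ioc l b) := fun _ hx _ hy hxy =>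
  intervalIntegral.integral_mono_interval hxy hy.2 le_rfl
    (ae_restrict_of_ae_restrict_of_subset (Ioc_subset_Ioc_left hx.1.le) hg_nonneg)
    (integrableOn_uIcc_of_locallyIntegrableOn hg hx
      (right_mem_Ioc.2 (hx.1.trans_le hx.2))).intervalIntegrable

lemma tendsto_integral_Ioc_left_atTop [NullSingletonClass μ] (hlb : l < b)
    (hg : LocallyIntegrableOn g (Ioc l b) μ) (hg_nonneg : 0 ≤ᵐ[μ.restrict (Ioc l b)] g)
    (hg_top : ∫⁻ v in Ioc l b, ENNReal.ofReal (g v) ∂μ = ⊤) :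
    Tendsto (fun x => ∫ v in x..b, g v ∂μ) (𝓝[>] l) atTop := by
  have hcover : AECover (μ.restrict (Ioc l b)) (𝓝[>] l) fun x => Ioc x b :=
    aecover_Ioc_of_Ioc (tendsto_nhdsWithin_of_tendsto_nhds tendsto_id) tendsto_const_nhds
  have hlim := hcover.lintegral_tendsto_of_countably_generated
    hg.aestronglyMeasurable.aemeasurable.ennreal_ofReal
  rw [hg_top] at hlim
  refine ENNReal.tendsto_ofReal_nhds_top.1 (hlim.congr' ?_)
  filter_upwards [Ioc_mem_nhdsGT hlb] with x hx
  have hsub : Ioc x b ⊆ Ioc l b := Ioc_subset_Ioc_left hx.1.le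
  have hint : IntegrableOn g (Ioc x b) μ :=
    (integrableOn_uIcc_of_locallyIntegrableOn hg hx (right_mem_Ioc.2 hlb)).mono_set
      (Ioc_subset_Icc_self.trans Icc_subset_uIcc)
  rw [Measure.restrict_restrict_of_subset hsub, intervalIntegral.integral_of_le hx.2,
    ofReal_integral_eq_lintegral_ofReal hint
      (ae_restrict_of_ae_restrict_of_subset hsub hg_nonneg)]

end Primitive

theorem yamada_watanabe_sequence_general {μ : Measure ℝ} [NullSingletonClass μ] {g : ℝ → ℝ}
    {l b : ℝ} (hlb : l < b) (hg : LocallyIntegrableOn g (Ioc l b) μ)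
    (hg_nonneg : 0 ≤ᵐ[μ.restrict (Ioc l b)] g)
    (hg_top : ∫⁻ v in Ioc l b, ENNReal.ofReal (g v) ∂μ = ⊤)
    {c : ℕ → ℝ} (hc_pos : ∀ n, 0 < c n) (hc : ¬ Summable c) :
    ∃ a : ℕ → ℝ, StrictAnti a ∧ a 0 = b ∧ (∀ n, l < a n) ∧ Tendsto a atTop (𝓝 l) ∧
      ∀ n, ∫ v in a (n + 1)..a n, g v ∂μ = c n := by
  have hsum_mono : StrictMono fun n => ∑ i ∈ Finset.range n, c i :=
    strictMono_nat_of_lt_succ fun n => by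
      simpa only [Finset.sum_range_succ] using lt_add_of_pos_right _ (hc_pos n)
  obtain ⟨a, ha_anti, ha_zero, ha_mem, ha_tendsto, ha_integral⟩ :=
    exists_strictAnti_tendsto_comp_eq hlb (continuousOn_integral_Ioc_left hg)
      (antitoneOn_integral_Ioc_left hg hg_nonneg)
      (tendsto_integral_Ioc_left_atTop hlb hg hg_nonneg hg_top) hsum_mono
      (Finset.sum_range_zero c |>.trans intervalIntegral.integral_same.symm)
      ((not_summable_iff_tendsto_nat_atTop_of_nonneg fun n => (hc_pos n).le).1 hc)
  refine ⟨a, ha_anti, ha_zero, fun n => (ha_mem n).1, ha_tendsto, fun n => ?_⟩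
  have hii (m : ℕ) : IntervalIntegrable g μ (a m) b :=
    (integrableOn_uIcc_of_locallyIntegrableOn hg (ha_mem m)
      (right_mem_Ioc.2 hlb)).intervalIntegrable
  have hadd := intervalIntegral.integral_add_adjacent_intervals
    ((hii (n + 1)).trans (hii n).symm) (hii n)
  calc ∫ v in a (n + 1)..a n, g v ∂μ
      = (∫ v in a (n + 1)..b, g v ∂μ) - ∫ v in a n..b, g v ∂μ := eq_sub_of_add_eq hadd
    _ = c n := by rw [ha_integral, ha_integral, Finset.sum_range_succ_sub_sum]

theorem yamada_watanabe_sequence (h : ℝ → ℝ)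
    (hcont : ContinuousOn h (Ici 0)) (hmono : MonotoneOn h (Ici 0))
    (h0 : h 0 = 0) (hpos : ∀ x > 0, 0 < h x)
    (hint : ∀ ε > 0, ∫⁻ v in Ioo 0 ε, ENNReal.ofReal (((h v) ^ 2)⁻¹) = ⊤) :
    ∃ a : ℕ → ℝ, StrictAnti a ∧ a 0 = 1 ∧ (∀ n, 0 < a n) ∧
      Tendsto a atTop (nhds 0) ∧
      ∀ n : ℕ, 1 ≤ n → (∫ v in (a n)..(a (n - 1)), ((h v) ^ 2)⁻¹) = n := by
  have hcont_inv : ContinuousOn (fun v => ((h v) ^ 2)⁻¹) (Ioc 0 1) :=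
    ((hcont.mono fun _ hv => hv.1.le).pow 2).inv₀ fun v hv => (pow_pos (hpos v hv.1) 2).ne'
  have hint_top : ∫⁻ v in Ioc 0 1, ENNReal.ofReal (((h v) ^ 2)⁻¹) = ⊤ := by
    rw [← setLIntegral_congr Ioo_ae_eq_Ioc, hint 1 one_pos]
  have hlevels : ¬ Summable fun n : ℕ => ((n + 1 : ℕ) : ℝ) := fun hs =>
    not_tendsto_nhds_of_tendsto_atTop
      (tendsto_natCast_atTop_atTop.comp (tendsto_add_atTop_nat 1)) 0 hs.tendsto_atTop_zero
  obtain ⟨a, ha_anti, ha_zero, ha_pos, ha_tendsto, ha_integral⟩ :=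
    yamada_watanabe_sequence_general one_pos (hcont_inv.locallyIntegrableOn measurableSet_Ioc)
      (.of_forall fun v => by positivity) hint_top (fun n => by positivity) hlevels
  refine ⟨a, ha_anti, ha_zero, ha_pos, ha_tendsto, fun n hn => ?_⟩
  simpa only [Nat.sub_add_cancel hn] using ha_integral (n - 1)
end

section
/- Let h : ℝ → ℝ be continuous and nondecreasing on [0,∞) with h(0) = 0 and h(x) > 0 for every x > 0. Let 0 < a < b and N > 0 be such that ∫_a^b h(v)^{-2} dv ≥ N. Then there exists a continuous function ρ : ℝ → ℝ with ρ ≥ 0, ρ(v) = 0 for every v outside the open interval (a,b), ∫_ℝ ρ(v) dv = 1, and ρ(v) ≤ 2/(N · h(v)^2) for every v ∈ (a,b). -/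
open MeasureTheory Set Filter

/-!
Since `∫ₐᵇ h⁻² ≥ N > N / 2`, already some closed `F ⊆ (a, b)` satisfies `∫_F h⁻² > N / 2`. A Urysohn
function `χ` equal to `1` on `F` and supported in `(a, b)` makes `χ h⁻²` continuous on all of `ℝ`,
whatever `h` does at the endpoints, and `N / 2 < ∫ χ h⁻²`. Normalizing by this integral costs at
most the factor `2 / N`.
-/

lemma exists_continuous_one_of_isClosed_subset_isOpen {X : Type*} [TopologicalSpace X]
    [NormalSpace X] {F U : Set X} (hF : IsClosed F) (hU : IsOpen U) (hFU : F ⊆ U) :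
    ∃ χ : C(X, ℝ), EqOn χ 1 F ∧ tsupport χ ⊆ U ∧ ∀ x, χ x ∈ Icc (0 : ℝ) 1 := by
  obtain ⟨V, hV, hFV, hVU⟩ := normal_exists_closure_subset hF hU hFU
  obtain ⟨χ, hχV, hχF, hχ01⟩ := exists_continuous_zero_one_of_isClosed hV.isClosed_compl hF
    (disjoint_compl_left_iff_subset.2 hFV)
  have hsupp : Function.support χ ⊆ V := fun x hx => by
    by_contra hxV
    exact hx (hχV hxV)
  exact ⟨χ, hχF, (closure_mono hsupp).trans hVU, hχ01⟩

section OpenSet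

variable {X : Type*} [PseudoEMetricSpace X] [MeasurableSpace X] [OpensMeasurableSpace X]
  {μ : Measure X} {U : Set X} {f : X → ℝ} {c : ℝ}

lemma exists_isClosed_subset_lt_setIntegral (hU : IsOpen U) (hf : IntegrableOn f U μ)
    (hc : c < ∫ x in U, f x ∂μ) :
    ∃ F ⊆ U, IsClosed F ∧ c < ∫ x in F, f x ∂μ := by
  obtain ⟨F, hF, hFU, rfl, hFmono⟩ := hU.exists_iUnion_isClosed
  have hlim := tendsto_setIntegral_of_monotone (fun n => (hF n).measurableSet) hFmono hf
  obtain ⟨n, hn⟩ := (hlim.eventually_const_lt hc).exists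
  exact ⟨F n, hFU n, hF n, hn⟩

lemma exists_continuous_le_lt_integral (hU : IsOpen U) (hfc : ContinuousOn f U)
    (hf0 : ∀ x ∈ U, 0 ≤ f x) (hfi : IntegrableOn f U μ) (hc : c < ∫ x in U, f x ∂μ) :
    ∃ g : X → ℝ, Continuous g ∧ (∀ x, 0 ≤ g x) ∧ (∀ x ∉ U, g x = 0) ∧ (∀ x ∈ U, g x ≤ f x) ∧
      c < ∫ x, g x ∂μ := by
  obtain ⟨F, hFU, hF, hcF⟩ := exists_isClosed_subset_lt_setIntegral hU hfi hc
  obtain ⟨χ, hχF, hχU, hχ01⟩ := exists_continuous_one_of_isClosed_subset_isOpen hF hU hFU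
  have hout : ∀ x ∉ U, χ x * f x = 0 := fun x hx => by
    rw [image_eq_zero_of_notMem_tsupport fun hx' => hx (hχU hx'), zero_mul]
  have hnonneg : ∀ x, 0 ≤ χ x * f x := fun x => by
    by_cases hx : x ∈ U
    · exact mul_nonneg (hχ01 x).1 (hf0 x hx)
    · exact (hout x hx).ge
  have hcont : Continuous fun x => χ x * f x :=
    (χ.continuous.continuousOn.mul hfc).continuous_of_tsupport_subset hU
      (tsupport_mul_subset_left.trans hχU)
  have hint : Integrable (fun x => χ x * f x) μ := by
    refine IntegrableOn.integrable_of_forall_notMem_eq_zero (s := U) ?_ hout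
    refine hfi.bdd_mul (c := 1) χ.continuous.aestronglyMeasurable (ae_of_all _ fun x => ?_)
    rw [Real.norm_of_nonneg (hχ01 x).1]
    exact (hχ01 x).2
  refine ⟨fun x => χ x * f x, hcont, hnonneg, hout,
    fun x hx => mul_le_of_le_one_left (hf0 x hx) (hχ01 x).2, ?_⟩
  calc c < ∫ x in F, f x ∂μ := hcF
    _ = ∫ x in F, χ x * f x ∂μ := setIntegral_congr_fun hF.measurableSet fun x hx => by
        simp only [hχF hx, Pi.one_apply, one_mul]
    _ ≤ ∫ x, χ x * f x ∂μ := setIntegral_le_integral hint (ae_of_all _ hnonneg)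

lemma exists_continuous_density_le_div (hU : IsOpen U) (hfc : ContinuousOn f U)
    (hf0 : ∀ x ∈ U, 0 ≤ f x) (hc0 : 0 < c) (hc : c < ∫ x in U, f x ∂μ) :
    ∃ ρ : X → ℝ, Continuous ρ ∧ (∀ x, 0 ≤ ρ x) ∧ (∀ x ∉ U, ρ x = 0) ∧ (∫ x, ρ x ∂μ = 1) ∧
      ∀ x ∈ U, ρ x ≤ f x / c := by
  have hfi : IntegrableOn f U μ := .of_integral_ne_zero (hc0.trans hc).ne'
  obtain ⟨g, hgc, hg0, hgU, hgf, hcg⟩ := exists_continuous_le_lt_integral hU hfc hf0 hfi hc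
  have hI : 0 < ∫ x, g x ∂μ := hc0.trans hcg
  refine ⟨fun x => g x / ∫ y, g y ∂μ, hgc.div_const _, fun x => div_nonneg (hg0 x) hI.le,
    fun x hx => by simp only [hgU x hx, zero_div], ?_,
    fun x hx => div_le_div₀ (hf0 x hx) (hgf x hx) hc0 hcg.le⟩
  rw [integral_div, div_self hI.ne']

end OpenSet

theorem yamada_watanabe_density_general {h : ℝ → ℝ} {a b N K : ℝ}
    (hcont : ContinuousOn h (Ioo a b)) (hne : ∀ v ∈ Ioo a b, h v ≠ 0) (hab : a ≤ b)
    (hN : 0 < N) (hK : 1 < K) (hint : N ≤ ∫ v in a..b, ((h v) ^ 2)⁻¹) :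
    ∃ ρ : ℝ → ℝ, Continuous ρ ∧ (∀ v, 0 ≤ ρ v) ∧
      (∀ v ∉ Ioo a b, ρ v = 0) ∧ (∫ v, ρ v = 1) ∧
      (∀ v ∈ Ioo a b, ρ v ≤ K / (N * (h v) ^ 2)) := by
  have hlt : N / K < ∫ v in Ioo a b, ((h v) ^ 2)⁻¹ := by
    rw [← integral_Ioc_eq_integral_Ioo, ← intervalIntegral.integral_of_le hab]
    exact (div_lt_self hN hK).trans_le hint
  have hinv : ContinuousOn (fun v => ((h v) ^ 2)⁻¹) (Ioo a b) :=
    (hcont.pow 2).inv₀ fun v hv => pow_ne_zero 2 (hne v hv)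
  obtain ⟨ρ, hρc, hρ0, hρout, hρ1, hρle⟩ := exists_continuous_density_le_div isOpen_Ioo hinv
    (fun v _ => by positivity) (by positivity) hlt
  refine ⟨ρ, hρc, hρ0, hρout, hρ1, fun v hv => (hρle v hv).trans_eq ?_⟩
  rw [div_div_eq_mul_div, inv_mul_eq_div, div_div, mul_comm N]

theorem yamada_watanabe_density (h : ℝ → ℝ)
    (hcont : ContinuousOn h (Ici 0)) (hmono : MonotoneOn h (Ici 0))
    (h0 : h 0 = 0) (hpos : ∀ x > 0, 0 < h x)
    (a b N : ℝ) (ha : 0 < a) (hab : a < b) (hN : 0 < N)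
    (hint : N ≤ ∫ v in a..b, ((h v) ^ 2)⁻¹) :
    ∃ ρ : ℝ → ℝ, Continuous ρ ∧ (∀ v, 0 ≤ ρ v) ∧
      (∀ v ∉ Ioo a b, ρ v = 0) ∧ (∫ v, ρ v = 1) ∧
      (∀ v ∈ Ioo a b, ρ v ≤ 2 / (N * (h v) ^ 2)) :=
  have hpos_of_mem : ∀ v ∈ Ioo a b, 0 < v := fun _ hv => ha.trans hv.1
  yamada_watanabe_density_general (hcont.mono fun v hv => (hpos_of_mem v hv).le)
    (fun v hv => (hpos v (hpos_of_mem v hv)).ne') hab.le hN one_lt_two hint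
end

section
/- Let ρ : ℝ → ℝ be measurable with ρ ≥ 0 and ρ integrable on ℝ. Then for all D, ζ ∈ ℝ, the (oriented) interval integral satisfies ∫_0^ζ ρ(D + r) · (ζ − r) dr ≤ ∫_ℝ ρ(D + r) · max(|ζ| − |r|, 0) dr. -/
/-!
Between `0` and `ζ` the weight `|ζ| - |r|` equals `|ζ - r|`, and the sign lost by the absolute value
is exactly the orientation of the integral. The left-hand side is therefore the integral over that
interval of the function on the right, which is nonnegative and, the truncated weight being
continuous with compact support, integrable.
-/

open MeasureTheory Set Filter

theorem max_abs_sub_abs_zero_eq_abs_sub {G : Type*} [AddCommGroup G] [LinearOrder G]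
    [IsOrderedAddMonoid G] {x y : G} (hx : x ∈ uIcc 0 y) : max (|y| - |x|) 0 = |y - x| := by
  suffices h : |y| - |x| = |y - x| by rw [h, max_eq_left (abs_nonneg _)]
  rcases mem_uIcc.mp hx with ⟨h0x, hxy⟩ | ⟨hyx, hx0⟩
  · rw [abs_of_nonneg (h0x.trans hxy), abs_of_nonneg h0x, abs_of_nonneg (sub_nonneg.mpr hxy)]
  · rw [abs_of_nonpos (hyx.trans hx0), abs_of_nonpos hx0, abs_of_nonpos (sub_nonpos.mpr hyx)]
    abel

theorem intervalIntegral_mul_sub_eq_setIntegral_mul_abs (f : ℝ → ℝ) (μ : Measure ℝ) (a b : ℝ) :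
    ∫ r in a..b, f r * (b - r) ∂μ = ∫ r in uIoc a b, f r * |b - r| ∂μ := by
  rcases le_total a b with hab | hba
  · rw [intervalIntegral.integral_of_le hab, uIoc_of_le hab]
    refine setIntegral_congr_fun measurableSet_Ioc fun r hr => ?_
    rw [abs_of_nonneg (sub_nonneg.mpr hr.2)]
  · rw [intervalIntegral.integral_of_ge hba, uIoc_of_ge hba, ← integral_neg]
    refine setIntegral_congr_fun measurableSet_Ioc fun r hr => ?_
    rw [abs_of_nonpos (sub_nonpos.mpr hr.1.le), mul_neg]

theorem hasCompactSupport_max_sub_norm_zero {E : Type*} [SeminormedAddGroup E] [ProperSpace E]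
    (c : ℝ) : HasCompactSupport fun x : E => max (c - ‖x‖) 0 := by
  refine .intro (isCompact_closedBall 0 c) fun x hx => max_eq_right (sub_nonpos.mpr ?_)
  rw [mem_closedBall_zero_iff, not_le] at hx
  exact hx.le

theorem integrable_mul_max_sub_norm_zero {E : Type*} [NormedAddGroup E] [ProperSpace E]
    [MeasurableSpace E] [OpensMeasurableSpace E] {μ : Measure E} {f : E → ℝ}
    (hf : LocallyIntegrable f μ) (c : ℝ) : Integrable (fun x => f x * max (c - ‖x‖) 0) μ :=
  hf.integrable_smul_right_of_hasCompactSupport (by fun_prop)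
    (hasCompactSupport_max_sub_norm_zero c)

theorem taylor_remainder_le_truncated_integral_general {μ : Measure ℝ} {f : ℝ → ℝ}
    (hf0 : 0 ≤ᵐ[μ] f) (hf : LocallyIntegrable f μ) (ζ : ℝ) :
    ∫ r in (0 : ℝ)..ζ, f r * (ζ - r) ∂μ ≤ ∫ r, f r * max (|ζ| - |r|) 0 ∂μ := by
  have integrand_nonneg : 0 ≤ᵐ[μ] fun r => f r * max (|ζ| - |r|) 0 :=
    hf0.mono fun r hr => mul_nonneg hr (le_max_right _ _)
  calc ∫ r in (0 : ℝ)..ζ, f r * (ζ - r) ∂μ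
      = ∫ r in uIoc 0 ζ, f r * |ζ - r| ∂μ :=
        intervalIntegral_mul_sub_eq_setIntegral_mul_abs f μ 0 ζ
    _ = ∫ r in uIoc 0 ζ, f r * max (|ζ| - |r|) 0 ∂μ :=
        setIntegral_congr_fun measurableSet_uIoc fun r hr => by
          rw [max_abs_sub_abs_zero_eq_abs_sub (uIoc_subset_uIcc hr)]
    _ ≤ ∫ r, f r * max (|ζ| - |r|) 0 ∂μ :=
        setIntegral_le_integral (integrable_mul_max_sub_norm_zero hf |ζ|) integrand_nonneg

theorem taylor_remainder_le_truncated_integral (ρ : ℝ → ℝ)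
    (hmeas : Measurable ρ) (hρ0 : ∀ v, 0 ≤ ρ v) (hint : Integrable ρ) :
    ∀ D ζ : ℝ, (∫ r in (0:ℝ)..ζ, ρ (D + r) * (ζ - r)) ≤
      ∫ r : ℝ, ρ (D + r) * max (|ζ| - |r|) 0 := fun D =>
  taylor_remainder_le_truncated_integral_general (ae_of_all _ fun r => hρ0 (D + r))
    (hint.comp_add_left D).locallyIntegrable
end

section
/- Let h : ℝ → ℝ be continuous and nondecreasing on [0,∞) with h(0) = 0 and h(x) > 0 for every x > 0, and suppose that ∫_{(0,ε)} h(v)^{-2} dv = ∞ for every ε > 0. Then there exists a sequence of functions ψ_n : ℝ → ℝ (n ≥ 1) such that for every n: ψ_n is twice continuously differentiable, ψ_n is even, ψ_n(0) = 0, |ψ_n'(y)| ≤ 1 for all y, 0 ≤ ψ_n''(y) ≤ 2/(n · h(|y|)²) for all y ≠ 0, and for every v ∈ ℝ the sequence n ↦ ψ_n(v) is nondecreasing with ψ_n(v) → |v| as n → ∞. -/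
open MeasureTheory Set Filter

/-!
If `ρ` is a probability density carried by `(b, a) ⊆ (0, ∞)`, its distribution function `Φ` rises
from `0` to `1` across `(b, a)`, so the primitive of `Φ` is within `a` of the positive part and
`ψ x = ∫₀ˣ Φ + ∫₀⁻ˣ Φ` is an even approximation of `|x|` with second derivative `ρ |x|`. Since the
weight `h⁻²` has infinite mass near `0`, however small `C` and `a` are, such a density exists below
`C h⁻²` as soon as `b` is close enough to `0`. Choosing the intervals `(b, a)` adjacent to one
another and shrinking to `0` makes `Φ`, hence `ψ`, increase along the sequence.
-/

open scoped Topology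

section Primitive

/-- The primitive of `f` vanishing at `0`, as an operator on functions so that it can be
iterated. -/
noncomputable def primitive (f : ℝ → ℝ) (x : ℝ) : ℝ := ∫ t in (0 : ℝ)..x, f t

variable {f g : ℝ → ℝ}

lemma primitive_zero (f : ℝ → ℝ) : primitive f 0 = 0 := intervalIntegral.integral_same

lemma hasDerivAt_primitive (hf : Continuous f) (x : ℝ) : HasDerivAt (primitive f) (f x) x :=
  (hf.integral_hasStrictDerivAt 0 x).hasDerivAt

lemma deriv_primitive (hf : Continuous f) : deriv (primitive f) = f :=
  funext fun x => (hasDerivAt_primitive hf x).deriv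

lemma differentiable_primitive (hf : Continuous f) : Differentiable ℝ (primitive f) :=
  fun x => (hasDerivAt_primitive hf x).differentiableAt

lemma contDiff_succ_primitive {n : ℕ} (hf : ContDiff ℝ n f) :
    ContDiff ℝ (n + 1) (primitive f) :=
  contDiff_succ_iff_deriv.2
    ⟨differentiable_primitive hf.continuous, by simp, by rwa [deriv_primitive hf.continuous]⟩

lemma monotone_primitive (hf : Continuous f) (hf0 : ∀ x, 0 ≤ f x) : Monotone (primitive f) :=
  monotone_of_deriv_nonneg (differentiable_primitive hf) (by rwa [deriv_primitive hf])

lemma primitive_le_primitive (hf : Continuous f) (hg : Continuous g) (hfg : ∀ x, f x ≤ g x)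
    {x : ℝ} (hx : 0 ≤ x) : primitive f x ≤ primitive g x :=
  intervalIntegral.integral_mono hx (hf.intervalIntegrable _ _) (hg.intervalIntegrable _ _) hfg

lemma primitive_add_integral (hf : Continuous f) (x y : ℝ) :
    primitive f x + ∫ t in x..y, f t = primitive f y :=
  intervalIntegral.integral_add_adjacent_intervals (hf.intervalIntegrable _ _)
    (hf.intervalIntegrable _ _)

end Primitive

/-- `ρ` is a continuous probability density on `[0, ∞)` vanishing outside `(b, a)`. Its second
primitive is the basic approximation of the positive part. -/
structure IsBumpDensity (ρ : ℝ → ℝ) (b a : ℝ) : Prop where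
  left_nonneg : 0 ≤ b
  continuous : Continuous ρ
  nonneg : ∀ x, 0 ≤ ρ x
  eq_zero_of_notMem : ∀ x ∉ Ioo b a, ρ x = 0
  integral_eq_one : ∫ x in b..a, ρ x = 1

/-- The symmetrised second primitive of `ρ`. For a bump density close to `0` it approximates the
absolute value. -/
noncomputable def absApprox (ρ : ℝ → ℝ) (x : ℝ) : ℝ :=
  primitive (primitive ρ) x + primitive (primitive ρ) (-x)

namespace IsBumpDensity

variable {ρ σ : ℝ → ℝ} {a b c x : ℝ}

lemma left_lt_right (hρ : IsBumpDensity ρ b a) : b < a := by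
  by_contra! hab
  have hzero : ρ = 0 := funext fun x => hρ.eq_zero_of_notMem x (by simp [Ioo_eq_empty_of_le hab])
  simpa [hzero] using hρ.integral_eq_one

lemma primitive_of_le (hρ : IsBumpDensity ρ b a) (hx : x ≤ b) : primitive ρ x = 0 :=
  intervalIntegral.integral_zero_ae <| ae_of_all _ fun t ht =>
    hρ.eq_zero_of_notMem t fun htI => htI.1.not_ge (ht.2.trans (max_le hρ.left_nonneg hx))

lemma primitive_of_ge (hρ : IsBumpDensity ρ b a) (hx : a ≤ x) : primitive ρ x = 1 := by
  have htail : ∫ t in a..x, ρ t = 0 :=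
    intervalIntegral.integral_zero_ae <| ae_of_all _ fun t ht =>
      hρ.eq_zero_of_notMem t fun htI => htI.2.not_gt (by simpa [hx] using ht.1)
  rw [← primitive_add_integral hρ.continuous a, ← primitive_add_integral hρ.continuous b,
    hρ.primitive_of_le le_rfl, hρ.integral_eq_one, htail, zero_add, add_zero]

lemma primitive_mem_Icc (hρ : IsBumpDensity ρ b a) (x : ℝ) : primitive ρ x ∈ Icc 0 1 := by
  have hmono := monotone_primitive hρ.continuous hρ.nonneg
  constructor
  · simpa only [hρ.primitive_of_le (min_le_right x b)] using hmono (min_le_left x b)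
  · simpa only [hρ.primitive_of_ge (le_max_right x a)] using hmono (le_max_left x a)

lemma primitive_le_of_adjacent (hρ : IsBumpDensity ρ b a) (hσ : IsBumpDensity σ c b) (x : ℝ) :
    primitive ρ x ≤ primitive σ x := by
  rcases le_total x b with hx | hx
  · exact (hρ.primitive_of_le hx).trans_le (hσ.primitive_mem_Icc x).1
  · exact (hρ.primitive_mem_Icc x).2.trans_eq (hσ.primitive_of_ge hx).symm

lemma continuous_primitive (hρ : IsBumpDensity ρ b a) : Continuous (primitive ρ) :=
  (differentiable_primitive hρ.continuous).continuous

lemma primitive_primitive_of_nonpos (hρ : IsBumpDensity ρ b a) (hx : x ≤ 0) :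
    primitive (primitive ρ) x = 0 :=
  intervalIntegral.integral_zero_ae <| ae_of_all _ fun _ ht =>
    hρ.primitive_of_le ((ht.2.trans (max_le le_rfl hx)).trans hρ.left_nonneg)

lemma primitive_primitive_le (hρ : IsBumpDensity ρ b a) (hx : 0 ≤ x) :
    primitive (primitive ρ) x ≤ x := by
  simpa [primitive] using
    primitive_le_primitive hρ.continuous_primitive (continuous_const (y := (1 : ℝ)))
      (fun t => (hρ.primitive_mem_Icc t).2) hx

lemma sub_le_primitive_primitive (hρ : IsBumpDensity ρ b a) (hx : 0 ≤ x) :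
    x - a ≤ primitive (primitive ρ) x := by
  have hnonneg : ∀ {y : ℝ}, 0 ≤ y → 0 ≤ primitive (primitive ρ) y := fun hy =>
    intervalIntegral.integral_nonneg hy fun t _ => (hρ.primitive_mem_Icc t).1
  rcases le_total x a with hxa | hax
  · exact (sub_nonpos.2 hxa).trans (hnonneg hx)
  · have htail : ∫ t in a..x, primitive ρ t = x - a := by
      rw [intervalIntegral.integral_congr (g := fun _ => (1 : ℝ)) fun _ ht =>
        hρ.primitive_of_ge (uIcc_of_le hax ▸ ht).1]
      simp
    rw [← primitive_add_integral hρ.continuous_primitive a, htail]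
    exact le_add_of_nonneg_left (hnonneg (hρ.left_nonneg.trans hρ.left_lt_right.le))

end IsBumpDensity

section AbsApprox

variable {ρ σ : ℝ → ℝ} {a b c : ℝ}

lemma absApprox_neg (ρ : ℝ → ℝ) (x : ℝ) : absApprox ρ (-x) = absApprox ρ x := by
  rw [absApprox, absApprox, neg_neg, add_comm]

lemma absApprox_zero (ρ : ℝ → ℝ) : absApprox ρ 0 = 0 := by
  simp only [absApprox, neg_zero, primitive_zero, add_zero]

lemma contDiff_two_absApprox (hρ : Continuous ρ) : ContDiff ℝ 2 (absApprox ρ) := by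
  have hΨ : ContDiff ℝ 2 (primitive (primitive ρ)) := by
    simpa [one_add_one_eq_two] using
      contDiff_succ_primitive (n := 1) (by simpa using contDiff_succ_primitive (contDiff_zero.2 hρ))
  exact hΨ.add (hΨ.comp contDiff_neg)

lemma deriv_absApprox (hρ : Continuous ρ) :
    deriv (absApprox ρ) = fun x => primitive ρ x - primitive ρ (-x) := by
  have hΨ := hasDerivAt_primitive (differentiable_primitive hρ).continuous
  funext x
  have h := (hΨ x).add ((hΨ (-x)).comp x (hasDerivAt_neg x))
  rw [mul_neg_one, ← sub_eq_add_neg] at h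
  exact h.deriv

lemma deriv_deriv_absApprox (hρ : Continuous ρ) (x : ℝ) :
    deriv (deriv (absApprox ρ)) x = ρ x + ρ (-x) := by
  have hΦ := hasDerivAt_primitive hρ
  have h := (hΦ x).sub ((hΦ (-x)).comp x (hasDerivAt_neg x))
  rw [mul_neg_one, sub_neg_eq_add] at h
  rw [deriv_absApprox hρ]
  exact h.deriv

namespace IsBumpDensity

lemma abs_deriv_absApprox_le_one (hρ : IsBumpDensity ρ b a) (x : ℝ) :
    |deriv (absApprox ρ) x| ≤ 1 := by
  rw [deriv_absApprox hρ.continuous]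
  have hpos := hρ.primitive_mem_Icc x
  have hneg := hρ.primitive_mem_Icc (-x)
  exact abs_le.2 ⟨by linarith [hpos.1, hneg.2], by linarith [hpos.2, hneg.1]⟩

lemma deriv_deriv_absApprox_eq (hρ : IsBumpDensity ρ b a) (x : ℝ) :
    deriv (deriv (absApprox ρ)) x = ρ |x| := by
  have hzero : ρ (-|x|) = 0 := hρ.eq_zero_of_notMem _ fun hx =>
    (hρ.left_nonneg.trans_lt hx.1).not_ge (neg_nonpos.2 (abs_nonneg x))
  rw [deriv_deriv_absApprox hρ.continuous]
  rcases abs_choice x with hx | hx <;> rw [hx] at hzero ⊢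
  · rw [hzero, add_zero]
  · rw [← neg_neg x, hzero, neg_neg, zero_add]

lemma absApprox_eq (hρ : IsBumpDensity ρ b a) (x : ℝ) :
    absApprox ρ x = primitive (primitive ρ) |x| := by
  have habs : absApprox ρ x = absApprox ρ |x| := by
    rcases abs_choice x with hx | hx <;> rw [hx]
    rw [absApprox_neg]
  rw [habs, absApprox, hρ.primitive_primitive_of_nonpos (neg_nonpos.2 (abs_nonneg x)), add_zero]

lemma absApprox_le_abs (hρ : IsBumpDensity ρ b a) (x : ℝ) : absApprox ρ x ≤ |x| := by
  rw [hρ.absApprox_eq]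
  exact hρ.primitive_primitive_le (abs_nonneg x)

lemma abs_sub_le_absApprox (hρ : IsBumpDensity ρ b a) (x : ℝ) : |x| - a ≤ absApprox ρ x := by
  rw [hρ.absApprox_eq]
  exact hρ.sub_le_primitive_primitive (abs_nonneg x)

lemma absApprox_le_of_adjacent (hρ : IsBumpDensity ρ b a) (hσ : IsBumpDensity σ c b) (x : ℝ) :
    absApprox ρ x ≤ absApprox σ x := by
  rw [hρ.absApprox_eq, hσ.absApprox_eq]
  exact primitive_le_primitive hρ.continuous_primitive hσ.continuous_primitive
    (hρ.primitive_le_of_adjacent hσ) (abs_nonneg x)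

end IsBumpDensity

end AbsApprox

section Existence

lemma exists_continuous_cutoff_le {f : ℝ → ℝ} {b b' a' a : ℝ} (hb : b < b') (hab' : b' ≤ a')
    (ha : a' < a) (hf : ContinuousOn f (Icc b a)) (hf0 : ∀ x ∈ Icc b a, 0 ≤ f x) :
    ∃ r : ℝ → ℝ, Continuous r ∧ (∀ x, 0 ≤ r x) ∧ (∀ x ∉ Ioo b a, r x = 0) ∧
      (∀ x ∈ Icc b a, r x ≤ f x) ∧ EqOn r f (Icc b' a') := by
  have hab : b ≤ a := (hb.trans_le hab').le.trans ha.le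
  have hsub : Icc b' a' ⊆ Ioo b a := Icc_subset_Ioo hb ha
  obtain ⟨χ, hχ0, hχ1, hχ⟩ := exists_continuous_zero_one_of_isClosed isOpen_Ioo.isClosed_compl
    isClosed_Icc (disjoint_compl_left_iff_subset.2 hsub)
  have hext : ∀ x ∈ Icc b a, IccExtend hab (domRestrict (Icc b a) f) x = f x := fun x hx =>
    IccExtend_of_mem hab _ hx
  refine ⟨fun x => χ x * IccExtend hab (domRestrict (Icc b a) f) x,
    χ.continuous.mul hf.domRestrict.Icc_extend', ?_, ?_, ?_, ?_⟩
  · exact fun x => mul_nonneg (hχ x).1 (hf0 _ (projIcc b a hab x).2)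
  · exact fun x hx => by simp only [hχ0 hx, Pi.zero_apply, zero_mul]
  · intro x hx
    simp only [hext x hx]
    exact mul_le_of_le_one_left (hf0 x hx) (hχ x).2
  · intro x hx
    simp only [hχ1 hx, Pi.one_apply, one_mul, hext x (Ioo_subset_Icc_self (hsub hx))]

lemma exists_isBumpDensity_le {f : ℝ → ℝ} {b b' a' a : ℝ} (hb0 : 0 ≤ b) (hb : b < b')
    (hab' : b' ≤ a') (ha : a' < a) (hf : ContinuousOn f (Icc b a))
    (hf0 : ∀ x ∈ Icc b a, 0 ≤ f x) (hmass : 1 ≤ ∫ x in b'..a', f x) :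
    ∃ ρ, IsBumpDensity ρ b a ∧ ∀ x ∈ Icc b a, ρ x ≤ f x := by
  obtain ⟨r, hr, hr0, hr_zero, hrf, hr_eq⟩ := exists_continuous_cutoff_le hb hab' ha hf hf0
  have hI : 1 ≤ ∫ x in b..a, r x :=
    calc (1 : ℝ) ≤ ∫ x in b'..a', f x := hmass
      _ = ∫ x in b'..a', r x :=
        intervalIntegral.integral_congr (uIcc_of_le hab' ▸ hr_eq.symm)
      _ ≤ ∫ x in b..a, r x :=
        intervalIntegral.integral_mono_interval hb.le hab' ha.le (ae_of_all _ hr0)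
          (hr.intervalIntegrable b a)
  have hI0 : 0 < ∫ x in b..a, r x := one_pos.trans_le hI
  refine ⟨fun x => r x / ∫ t in b..a, r t, ⟨hb0, hr.div_const _, ?_, ?_, ?_⟩, ?_⟩
  · exact fun x => div_nonneg (hr0 x) hI0.le
  · exact fun x hx => by rw [hr_zero x hx, zero_div]
  · rw [intervalIntegral.integral_div, div_self hI0.ne']
  · exact fun x hx => (div_le_self (hr0 x) hI).trans (hrf x hx)

lemma tendsto_intervalIntegral_nhdsGT_atTop {g : ℝ → ℝ} {p a : ℝ} (hpa : p < a)
    (hg : ContinuousOn g (Ioc p a)) (hg0 : ∀ x ∈ Ioc p a, 0 ≤ g x)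
    (hint : ∫⁻ x in Ioo p a, ENNReal.ofReal (g x) = ⊤) :
    Tendsto (fun b => ∫ x in b..a, g x) (𝓝[>] p) atTop := by
  have hcover : AECover (volume.restrict (Ioc p a)) (𝓝[>] p) fun b => Ioc b a :=
    aecover_Ioc_of_Ioc (tendsto_nhdsWithin_of_tendsto_nhds tendsto_id) tendsto_const_nhds
  have hlim := hcover.lintegral_tendsto_of_countably_generated
    (hg.aemeasurable measurableSet_Ioc).ennreal_ofReal
  rw [← setLIntegral_congr Ioo_ae_eq_Ioc, hint] at hlim
  refine ENNReal.tendsto_ofReal_nhds_top.1 (hlim.congr' ?_)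
  filter_upwards [Ioo_mem_nhdsGT hpa] with b hb
  have hsub : Icc b a ⊆ Ioc p a := Icc_subset_Ioc hb.1 le_rfl
  rw [intervalIntegral.integral_of_le hb.2.le, ofReal_integral_eq_lintegral_ofReal]
  · rw [Measure.restrict_restrict measurableSet_Ioc,
      inter_eq_left.2 (Ioc_subset_Ioc_left hb.1.le)]
  · exact (hg.mono hsub).integrableOn_Icc.mono_set Ioc_subset_Icc_self
  · exact (ae_restrict_iff' measurableSet_Ioc).2 <| ae_of_all _ fun x hx =>
      hg0 x (hsub (Ioc_subset_Icc_self hx))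

variable {g : ℝ → ℝ}

lemma eventually_exists_isBumpDensity_le (hg : ContinuousOn g (Ioi 0)) (hg0 : ∀ x > 0, 0 ≤ g x)
    (hint : ∀ ε > 0, ∫⁻ x in Ioo 0 ε, ENNReal.ofReal (g x) = ⊤) {a C : ℝ} (ha : 0 < a)
    (hC : 0 < C) :
    ∀ᶠ b in 𝓝[>] 0, ∃ ρ, IsBumpDensity ρ b a ∧ ∀ x > 0, ρ x ≤ C * g x := by
  have ha2 : 0 < a / 2 := half_pos ha
  have hlim : Tendsto (fun b => ∫ x in b..a / 2, C * g x) (𝓝[>] 0) atTop := by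
    simp only [intervalIntegral.integral_const_mul]
    exact (tendsto_intervalIntegral_nhdsGT_atTop ha2 (hg.mono Ioc_subset_Ioi_self)
      (fun x hx => hg0 x hx.1) (hint _ ha2)).const_mul_atTop hC
  obtain ⟨b', hmass, hb'⟩ := ((hlim.eventually_ge_atTop 1).and (Ioo_mem_nhdsGT ha2)).exists
  filter_upwards [Ioo_mem_nhdsGT hb'.1] with b hb
  have hpos : ∀ x ∈ Icc b a, 0 < x := fun x hx => hb.1.trans_le hx.1
  obtain ⟨ρ, hρ, hρg⟩ := exists_isBumpDensity_le hb.1.le hb.2 hb'.2.le (half_lt_self ha)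
    (continuousOn_const.mul (hg.mono hpos)) (fun x hx => mul_nonneg hC.le (hg0 x (hpos x hx))) hmass
  refine ⟨ρ, hρ, fun x hx => ?_⟩
  by_cases hxI : x ∈ Ioo b a
  · exact hρg x (Ioo_subset_Icc_self hxI)
  · rw [hρ.eq_zero_of_notMem x hxI]
    exact mul_nonneg hC.le (hg0 x hx)

lemma exists_seq_isBumpDensity_le (hg : ContinuousOn g (Ioi 0)) (hg0 : ∀ x > 0, 0 ≤ g x)
    (hint : ∀ ε > 0, ∫⁻ x in Ioo 0 ε, ENNReal.ofReal (g x) = ⊤) {c : ℕ → ℝ} (hc : ∀ n, 0 < c n) :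
    ∃ (a : ℕ → ℝ) (ρ : ℕ → ℝ → ℝ), Tendsto a atTop (𝓝 0) ∧
      ∀ n, IsBumpDensity (ρ n) (a (n + 1)) (a n) ∧ ∀ x > 0, ρ n x ≤ c n * g x := by
  have hstep (n : ℕ) (a : Ioi (0 : ℝ)) : ∃ (b : Ioi (0 : ℝ)) (ρ : ℝ → ℝ), b.1 ≤ 1 / 2 * a ∧
      IsBumpDensity ρ b a ∧ ∀ x > 0, ρ x ≤ c n * g x := by
    obtain ⟨b, ⟨ρ, hρ⟩, hb⟩ := ((eventually_exists_isBumpDensity_le hg hg0 hint a.2 (hc n)).and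
      (Ioo_mem_nhdsGT (mul_pos one_half_pos a.2))).exists
    exact ⟨⟨b, hb.1⟩, ρ, hb.2.le, hρ⟩
  choose next ρ hnext hρ using hstep
  let a : ℕ → Ioi (0 : ℝ) := fun n => Nat.rec ⟨1, mem_Ioi.2 one_pos⟩ next n
  have hgeom (n : ℕ) : (a n).1 ≤ (1 / 2) ^ n := by
    simpa [a] using le_geom (u := fun n => (a n).1) one_half_pos.le n fun k _ => hnext k (a k)
  have hlim : Tendsto (fun n => (a n).1) atTop (𝓝 0) :=
    squeeze_zero (fun n => (a n).2.le) hgeom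
      (tendsto_pow_atTop_nhds_zero_of_lt_one one_half_pos.le one_half_lt_one)
  exact ⟨fun n => (a n).1, fun n => ρ n (a n), hlim, fun n => hρ n (a n)⟩

end Existence

theorem yamada_watanabe_approximation_general {g : ℝ → ℝ} (hg : ContinuousOn g (Ioi 0))
    (hg0 : ∀ x > 0, 0 ≤ g x) (hint : ∀ ε > 0, ∫⁻ x in Ioo 0 ε, ENNReal.ofReal (g x) = ⊤)
    {c : ℕ → ℝ} (hc : ∀ n, 0 < c n) :
    ∃ ψ : ℕ → ℝ → ℝ,
      (∀ n, ContDiff ℝ 2 (ψ n) ∧ (∀ y, ψ n (-y) = ψ n y) ∧ ψ n 0 = 0 ∧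
        (∀ y, |deriv (ψ n) y| ≤ 1) ∧
        (∀ y, y ≠ 0 → 0 ≤ deriv (deriv (ψ n)) y ∧ deriv (deriv (ψ n)) y ≤ c n * g |y|)) ∧
      (∀ v, Monotone fun n => ψ n v) ∧
      (∀ v, Tendsto (fun n => ψ n v) atTop (𝓝 |v|)) := by
  obtain ⟨a, ρ, ha, hρ⟩ := exists_seq_isBumpDensity_le hg hg0 hint hc
  have hbump (n : ℕ) : IsBumpDensity (ρ n) (a (n + 1)) (a n) := (hρ n).1
  refine ⟨fun n => absApprox (ρ n), fun n => ⟨contDiff_two_absApprox (hbump n).continuous,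
    absApprox_neg _, absApprox_zero _, (hbump n).abs_deriv_absApprox_le_one, fun y hy => ?_⟩,
    fun v => monotone_nat_of_le_succ fun n => (hbump n).absApprox_le_of_adjacent (hbump (n + 1)) v,
    fun v => ?_⟩
  · rw [(hbump n).deriv_deriv_absApprox_eq]
    exact ⟨(hbump n).nonneg _, (hρ n).2 _ (abs_pos.2 hy)⟩
  · exact tendsto_of_tendsto_of_tendsto_of_le_of_le (by simpa using ha.const_sub |v|)
      tendsto_const_nhds (fun n => (hbump n).abs_sub_le_absApprox v)
      fun n => (hbump n).absApprox_le_abs v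

theorem yamada_watanabe_approximation (h : ℝ → ℝ)
    (hcont : ContinuousOn h (Ici 0)) (hmono : MonotoneOn h (Ici 0))
    (h0 : h 0 = 0) (hpos : ∀ x > 0, 0 < h x)
    (hint : ∀ ε > 0, ∫⁻ v in Ioo 0 ε, ENNReal.ofReal (((h v) ^ 2)⁻¹) = ⊤) :
    ∃ ψ : ℕ → ℝ → ℝ,
      (∀ n : ℕ, 1 ≤ n →
        ContDiff ℝ 2 (ψ n) ∧ (∀ y, ψ n (-y) = ψ n y) ∧ ψ n 0 = 0 ∧
        (∀ y, |deriv (ψ n) y| ≤ 1) ∧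
        (∀ y : ℝ, y ≠ 0 → 0 ≤ deriv (deriv (ψ n)) y ∧
          deriv (deriv (ψ n)) y ≤ 2 / (n * (h |y|) ^ 2))) ∧
      (∀ v : ℝ, ∀ m n : ℕ, 1 ≤ m → m ≤ n → ψ m v ≤ ψ n v) ∧
      (∀ v : ℝ, Tendsto (fun n => ψ n v) atTop (nhds |v|)) := by
  -- `max n 1` keeps the bound positive at the unconstrained index `0`.
  obtain ⟨ψ, hψ, hψmono, hlim⟩ := yamada_watanabe_approximation_general
    (g := fun v => (h v ^ 2)⁻¹) (c := fun n => 2 / (max n 1 : ℕ))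
    (((hcont.mono Ioi_subset_Ici_self).pow 2).inv₀ fun x hx => pow_ne_zero 2 (hpos x hx).ne')
    (fun x _ => by positivity) hint (fun n => by positivity)
  refine ⟨ψ, fun n hn => ?_, fun v _ _ _ hmn => hψmono v hmn, hlim⟩
  simpa only [max_eq_left hn, div_eq_mul_inv, mul_inv, mul_assoc] using hψ n
end
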